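/- arXiv:1806.02063 — 15 statements merged into one kernel-verified Lean document; each statement's English description precedes it below -/
import Mathlib

section
/- Let 1 ≤ δ ≤ Δ be integers and let h̃ : ℤ⁺ → ℝ⁺ be a positive non-decreasing function. If G is a finite simple graph with minimum vertex degree δ and maximum vertex degree Δ, and Δ(δ+1) is even, then J(G) = Σ_{u∈V(G)} h̃(d_u) ≥ Δ·h̃(δ) + h̃(Δ). -/
/-!
A vertex of maximum degree contributes `h Δ` to the sum, and each of its `Δ` neighbours
contributes at least `h δ` because `h` is monotone. The remaining vertices contribute positive
terms, which are dropped.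
-/

open Finset

theorem stmt_0 {V : Type} [Fintype V] (G : SimpleGraph V) [DecidableRel G.Adj]
    (δ Δ : ℕ) (hδ1 : 1 ≤ δ) (hδΔ : δ ≤ Δ)
    (h : ℕ → ℝ) (hpos : ∀ n, 0 < h n) (hmono : Monotone h)
    (hmin : G.minDegree = δ) (hmax : G.maxDegree = Δ)
    (hpar : Even (Δ * (δ + 1))) :
    (Δ : ℝ) * h δ + h Δ ≤ ∑ u : V, h (G.degree u) := by
  classical
  have : Nonempty V := by
    by_contra hV
    rw [not_nonempty_iff] at hV
    have h0 : G.maxDegree = 0 := by simp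
    omega
  obtain ⟨u, hu⟩ := G.exists_maximal_degree_vertex
  have hdeg : G.degree u = Δ := hu.symm.trans hmax
  have hu_notMem : u ∉ G.neighborFinset u := by simp
  calc (Δ : ℝ) * h δ + h Δ
      = h (G.degree u) + ∑ _v ∈ G.neighborFinset u, h δ := by
        rw [Finset.sum_const, G.card_neighborFinset_eq_degree, hdeg, nsmul_eq_mul, add_comm]
    _ ≤ h (G.degree u) + ∑ v ∈ G.neighborFinset u, h (G.degree v) := by
        gcongr with v _
        exact hmono (hmin ▸ G.minDegree_le_degree v)
    _ = ∑ v ∈ insert u (G.neighborFinset u), h (G.degree v) :=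
        (Finset.sum_insert (f := fun v => h (G.degree v)) hu_notMem).symm
    _ ≤ ∑ v : V, h (G.degree v) :=
        Finset.sum_le_sum_of_subset_of_nonneg (Finset.subset_univ _)
          fun v _ _ => (hpos _).le
end

section
/- Let 1 ≤ δ ≤ Δ be integers and let h̃ : ℤ⁺ → ℝ⁺ be a positive non-decreasing function. If G is a finite simple graph with minimum vertex degree δ and maximum vertex degree Δ, and Δ(δ+1) is odd, then J(G) = Σ_{u∈V(G)} h̃(d_u) ≥ (Δ−1)·h̃(δ) + h̃(δ+1) + h̃(Δ). -/
open Finset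

/-!
Since `Δ * (δ + 1)` is odd, `Δ` is odd and `δ` is even. Let `w` have degree `Δ`. If every other vertex
had degree `δ`, the degree sum would be `Δ + (n - 1) * δ`, which is odd, against the handshake lemma.
So some `v ≠ w` has degree at least `δ + 1`. The remaining `n - 2 ≥ Δ - 1` vertices each contribute
at least `h δ > 0`, which gives the bound.
-/

theorem stmt_1 {V : Type} [Fintype V] (G : SimpleGraph V) [DecidableRel G.Adj]
    (δ Δ : ℕ) (hδ1 : 1 ≤ δ) (hδΔ : δ ≤ Δ)
    (h : ℕ → ℝ) (hpos : ∀ n, 0 < h n) (hmono : Monotone h)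
    (hmin : G.minDegree = δ) (hmax : G.maxDegree = Δ)
    (hpar : Odd (Δ * (δ + 1))) :
    ((Δ : ℝ) - 1) * h δ + h (δ + 1) + h Δ ≤ ∑ u : V, h (G.degree u) := by
  classical
  obtain ⟨hΔ, hδ⟩ := Nat.odd_mul.mp hpar
  have hδe : Even δ := by
    rcases Nat.even_or_odd δ with he | ho
    · exact he
    · exact absurd ho.add_one (Nat.not_even_iff_odd.mpr hδ)
  have hne : Nonempty V := by
    by_contra hemp
    rw [not_nonempty_iff] at hemp
    have h0 : G.maxDegree = 0 := by simp
    omega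
  obtain ⟨w, hw⟩ := G.exists_maximal_degree_vertex
  have hwΔ : G.degree w = Δ := hw.symm.trans hmax
  have hge : ∀ v, δ ≤ G.degree v := fun v => hmin ▸ G.minDegree_le_degree v
  obtain ⟨v, hvw, hv⟩ : ∃ v, v ≠ w ∧ δ + 1 ≤ G.degree v := by
    by_contra! hcon
    have hall : ∀ v ∈ univ.erase w, G.degree v = δ := fun v hv =>
      le_antisymm (Nat.lt_succ_iff.mp (hcon v (ne_of_mem_erase hv))) (hge v)
    have hsum := G.sum_degrees_eq_twice_card_edges
    rw [← add_sum_erase univ _ (mem_univ w), sum_congr rfl hall, sum_const, smul_eq_mul, hwΔ] at hsum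
    have hodd : Odd (Δ + #(univ.erase w) * δ) := hΔ.add_even (hδe.mul_left _)
    rw [hsum] at hodd
    exact Nat.not_even_iff_odd.mpr hodd (even_two_mul _)
  have hvmem : v ∈ univ.erase w := mem_erase.mpr ⟨hvw, mem_univ v⟩
  rw [← add_sum_erase univ _ (mem_univ w), ← add_sum_erase _ _ hvmem, hwΔ]
  have hcard : #((univ.erase w).erase v) + 2 = Fintype.card V := by
    have h1 := card_erase_add_one hvmem
    have h2 := card_erase_add_one (mem_univ w)
    rw [card_univ] at h2
    omega
  have hlt : Δ < Fintype.card V := hwΔ ▸ G.degree_lt_card_verts w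
  have hrest : (#((univ.erase w).erase v) : ℝ) * h δ
      ≤ ∑ u ∈ (univ.erase w).erase v, h (G.degree u) := by
    rw [← nsmul_eq_mul]
    exact card_nsmul_le_sum _ _ _ fun u _ => hmono (hge u)
  have hcount : (Δ : ℝ) - 1 ≤ #((univ.erase w).erase v) := by
    have : Δ ≤ #((univ.erase w).erase v) + 1 := by omega
    rw [sub_le_iff_le_add]
    exact_mod_cast this
  have hmul := mul_le_mul_of_nonneg_right hcount (hpos δ).le
  linarith [hmono hv]
end

section
/- Let 1 ≤ δ ≤ Δ be integers with Δ(δ+1) even, and let h̃ : ℤ⁺ → ℝ⁺ be a positive non-decreasing function with h̃(δ) < h̃(δ+1). Then a finite simple graph G with minimum degree δ and maximum degree Δ satisfies J(G) ≤ J(Γ) for every finite simple graph Γ with minimum degree δ and maximum degree Δ if and only if G has exactly Δ+1 vertices, of which Δ vertices have degree δ and one vertex has degree Δ (here we use δ < Δ for this degree description; if δ = Δ the minimal graphs are exactly the complete graphs K_{Δ+1}). -/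
/-!
A graph with maximum degree `Δ` has a vertex `v₀` of degree `Δ`, hence at least `Δ + 1` vertices,
and every other vertex contributes at least `h δ` to `J`. So `J ≥ Δ * h δ + h Δ`
(`lower_bound`); since `h δ > 0` and `h δ < h (δ + 1)`, equality forces exactly `Δ + 1` vertices,
all of degree `δ` except `v₀` (`eq_case`).

The bound is attained (`exists_extremal`): as `Δ * (δ + 1)` is even, so is `Δ * (δ - 1)`, hence
there is a `(δ - 1)`-regular circulant graph on `ZMod Δ` (`exists_regular`), and the cone over it
has the required degrees. Thus minimality is equivalent to equality in the bound.
-/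

open Finset

/-- A set of `k` nonzero residues modulo `n`, given by representatives in `{1, …, n - 1}`, that is
closed under negation. -/
lemma exists_symm_set (n k : ℕ) (hk : k < n) (he : Even (n * k)) :
    ∃ T : Finset ℕ, T.card = k ∧ (∀ t ∈ T, 1 ≤ t ∧ t < n) ∧ ∀ t ∈ T, n - t ∈ T := by
  rcases Nat.even_or_odd' k with ⟨m, rfl | rfl⟩
  · refine ⟨Icc 1 m ∪ Icc (n - m) (n - 1), ?_, ?_, ?_⟩
    · rw [card_union_of_disjoint]
      · simp only [Nat.card_Icc]
        omega
      · rw [Finset.disjoint_left]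
        intro a
        simp only [mem_Icc]
        omega
    · intro t
      simp only [mem_union, mem_Icc]
      omega
    · intro t
      simp only [mem_union, mem_Icc]
      omega
  · have hn : Even n := by
      rcases Nat.even_mul.1 he with h | h
      · exact h
      · exact absurd h (by simp)
    obtain ⟨p, rfl⟩ := hn
    -- An odd valency needs the involution `n / 2`: take the interval of radius `m` around it.
    refine ⟨Icc (p - m) (p + m), ?_, ?_, ?_⟩
    · simp only [Nat.card_Icc]
      omega
    · intro t
      simp only [mem_Icc]
      omega
    · intro t
      simp only [mem_Icc]
      omega

open Classical in
/-- A `k`-regular graph on `n` vertices exists (as a circulant graph) when `k < n` and `n * k` is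
even. -/
lemma exists_regular (n k : ℕ) (hk : k < n) (he : Even (n * k)) :
    ∃ (W : Type) (_ : Fintype W) (R : SimpleGraph W),
      Fintype.card W = n ∧ ∀ w, R.degree w = k := by
  obtain ⟨T, hc, hT, hs⟩ := exists_symm_set n k hk he
  have : NeZero n := ⟨by omega⟩
  set S : Finset (ZMod n) := T.image (fun t : ℕ => (t : ZMod n)) with hS
  have hval : ∀ t ∈ T, ((t : ZMod n)).val = t := fun t ht => ZMod.val_cast_of_lt (hT t ht).2
  have hSc : S.card = k := by
    rw [hS, card_image_of_injOn, hc]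
    intro a ha b hb hab
    have := congrArg ZMod.val hab
    simpa [hval a ha, hval b hb] using this
  have h0 : (0 : ZMod n) ∉ S := by
    intro h
    obtain ⟨t, ht, h⟩ := mem_image.1 h
    have h1 := hval t ht
    rw [h, ZMod.val_zero] at h1
    have := hT t ht
    omega
  have hneg : ∀ x ∈ S, -x ∈ S := by
    intro x hx
    obtain ⟨t, ht, rfl⟩ := mem_image.1 hx
    refine mem_image.2 ⟨n - t, hs t ht, ?_⟩
    rw [Nat.cast_sub (hT t ht).2.le]
    simp
  let R : SimpleGraph (ZMod n) :=
    { Adj := fun u v => v - u ∈ S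
      symm := ⟨fun u v huv => by simpa using hneg _ huv⟩
      loopless := ⟨fun u hu => h0 (by simpa using hu)⟩ }
  refine ⟨ZMod n, inferInstance, R, ZMod.card n, fun w => ?_⟩
  rw [← hSc, ← SimpleGraph.card_neighborFinset_eq_degree]
  rw [← card_image_of_injective S (add_right_injective w)]
  congr 1
  ext v
  rw [SimpleGraph.mem_neighborFinset, mem_image]
  constructor
  · intro hv
    exact ⟨v - w, hv, by ring⟩
  · rintro ⟨x, hx, rfl⟩
    change w + x - w ∈ S
    simpa using hx

/-- The cone over `R`: a new vertex `none` joined to every vertex of `R`. -/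
def coneGraph {W : Type} (R : SimpleGraph W) : SimpleGraph (Option W) where
  Adj
    | none, none => False
    | none, some _ => True
    | some _, none => True
    | some a, some b => R.Adj a b
  symm := ⟨by
    rintro (_ | a) (_ | b) hab
    · exact hab
    · trivial
    · trivial
    · exact R.adj_symm hab⟩
  loopless := ⟨by
    rintro (_ | a) ha
    · exact ha
    · exact R.loopless.irrefl a ha⟩

open Classical in
lemma degree_cone_none {W : Type} [Fintype W] (R : SimpleGraph W) :
    (coneGraph R).degree none = Fintype.card W := by
  rw [← SimpleGraph.card_neighborFinset_eq_degree]
  have : (coneGraph R).neighborFinset none = univ.map Function.Embedding.some := by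
    ext (_ | v) <;> rw [SimpleGraph.mem_neighborFinset] <;> simp [coneGraph]
  rw [this, card_map, card_univ]

open Classical in
lemma degree_cone_some {W : Type} [Fintype W] (R : SimpleGraph W) (a : W) :
    (coneGraph R).degree (some a) = R.degree a + 1 := by
  rw [← SimpleGraph.card_neighborFinset_eq_degree, ← SimpleGraph.card_neighborFinset_eq_degree]
  have : (coneGraph R).neighborFinset (some a) = Finset.insertNone (R.neighborFinset a) := by
    ext (_ | v) <;> rw [SimpleGraph.mem_neighborFinset] <;> simp [coneGraph]
  rw [this, card_insertNone]

open Classical in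
/-- The lower bound `Δ * h δ + h Δ` on `J` is attained. -/
lemma exists_extremal (δ Δ : ℕ) (hδ1 : 1 ≤ δ) (hδΔ : δ ≤ Δ) (hpar : Even (Δ * (δ + 1)))
    (h : ℕ → ℝ) :
    ∃ (W : Type) (_ : Fintype W) (Γ : SimpleGraph W),
      Γ.minDegree = δ ∧ Γ.maxDegree = Δ ∧ ∑ w, h (Γ.degree w) = Δ * h δ + h Δ := by
  have he : Even (Δ * (δ - 1)) := by
    obtain ⟨k, rfl⟩ : ∃ k, δ = k + 1 := ⟨δ - 1, by omega⟩
    simp only [Nat.add_sub_cancel]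
    rw [Nat.even_mul] at hpar ⊢
    rcases hpar with hp | hp
    · exact Or.inl hp
    · exact Or.inr (by simpa [Nat.even_add_one] using hp)
  obtain ⟨W, _, R, hc, hR⟩ := exists_regular Δ (δ - 1) (by omega) he
  have hn := degree_cone_none R
  rw [hc] at hn
  have hs : ∀ a, (coneGraph R).degree (some a) = δ := fun a => by
    rw [degree_cone_some, hR]
    omega
  have hne : Nonempty W := Fintype.card_pos_iff.1 (by omega)
  obtain ⟨a⟩ := hne
  refine ⟨Option W, inferInstance, coneGraph R, le_antisymm ?_ ?_, le_antisymm ?_ ?_, ?_⟩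
  · exact hs a ▸ (coneGraph R).minDegree_le_degree (some a)
  · apply SimpleGraph.le_minDegree_of_forall_le_degree
    rintro (_ | b)
    · rw [hn]
      exact hδΔ
    · exact (hs b).ge
  · apply SimpleGraph.maxDegree_le_of_forall_degree_le
    rintro (_ | b)
    · exact hn.le
    · rw [hs b]
      exact hδΔ
  · calc Δ = (coneGraph R).degree none := hn.symm
      _ ≤ _ := (coneGraph R).degree_le_maxDegree none
  · rw [Fintype.sum_option, hn]
    simp only [hs, sum_const, card_univ, hc, nsmul_eq_mul]
    ring

open Classical in
lemma card_erase_ge {W : Type} [Fintype W] (Γ : SimpleGraph W) [DecidableRel Γ.Adj] (v₀ : W) :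
    Γ.degree v₀ ≤ (univ.erase v₀).card := by
  have := Γ.degree_lt_card_verts v₀
  rw [card_erase_of_mem (mem_univ _), card_univ]
  omega

lemma lower_bound {W : Type} [Fintype W] (Γ : SimpleGraph W) [DecidableRel Γ.Adj] (δ Δ : ℕ)
    (hδ1 : 1 ≤ δ) (h : ℕ → ℝ) (hpos : ∀ n, 0 < h n) (hmono : Monotone h)
    (hmin : Γ.minDegree = δ) (hmax : Γ.maxDegree = Δ) :
    (Δ : ℝ) * h δ + h Δ ≤ ∑ w, h (Γ.degree w) := by
  classical
  have : Nonempty W := by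
    by_contra hne
    rw [not_nonempty_iff] at hne
    rw [SimpleGraph.minDegree_of_subsingleton] at hmin
    omega
  obtain ⟨v₀, hv₀⟩ := Γ.exists_maximal_degree_vertex
  have hd : Γ.degree v₀ = Δ := by omega
  have hc := card_erase_ge Γ v₀
  rw [hd] at hc
  rw [← sum_erase_add _ _ (mem_univ v₀), hd]
  have h1 : ((univ.erase v₀).card : ℝ) * h δ ≤ ∑ w ∈ univ.erase v₀, h (Γ.degree w) := by
    rw [← nsmul_eq_mul]
    exact card_nsmul_le_sum _ _ _ fun w _ => hmono (hmin ▸ Γ.minDegree_le_degree w)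
  have h2 : (Δ : ℝ) * h δ ≤ ((univ.erase v₀).card : ℝ) * h δ :=
    mul_le_mul_of_nonneg_right (by exact_mod_cast hc) (hpos δ).le
  linarith

/-- A graph with `J ≤ Δ * h δ + h Δ` has `Δ + 1` vertices, and all but one have degree `δ`. -/
lemma eq_case {W : Type} [Fintype W] (Γ : SimpleGraph W) [DecidableRel Γ.Adj] (δ Δ : ℕ)
    (hδ1 : 1 ≤ δ) (h : ℕ → ℝ) (hpos : ∀ n, 0 < h n) (hmono : Monotone h)
    (hstrict : h δ < h (δ + 1))
    (hmin : Γ.minDegree = δ) (hmax : Γ.maxDegree = Δ)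
    (hle : ∑ w, h (Γ.degree w) ≤ (Δ : ℝ) * h δ + h Δ) :
    Fintype.card W = Δ + 1 ∧ ∃ v₀, Γ.degree v₀ = Δ ∧ ∀ w, w ≠ v₀ → Γ.degree w = δ := by
  classical
  have : Nonempty W := by
    by_contra hne
    rw [not_nonempty_iff] at hne
    rw [SimpleGraph.minDegree_of_subsingleton] at hmin
    omega
  obtain ⟨v₀, hv₀⟩ := Γ.exists_maximal_degree_vertex
  have hd : Γ.degree v₀ = Δ := by omega
  have hc := card_erase_ge Γ v₀
  rw [hd] at hc
  rw [← sum_erase_add _ _ (mem_univ v₀), hd] at hle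
  have hge : ∀ w ∈ univ.erase v₀, h δ ≤ h (Γ.degree w) :=
    fun w _ => hmono (hmin ▸ Γ.minDegree_le_degree w)
  have h1 : ((univ.erase v₀).card : ℝ) * h δ ≤ ∑ w ∈ univ.erase v₀, h (Γ.degree w) := by
    rw [← nsmul_eq_mul]
    exact card_nsmul_le_sum _ _ _ hge
  have h2 : ((univ.erase v₀).card : ℝ) ≤ Δ :=
    le_of_mul_le_mul_right (by linarith : _ * h δ ≤ _ * h δ) (hpos δ)
  have h3 : (univ.erase v₀).card = Δ := le_antisymm (by exact_mod_cast h2) hc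
  have hcard : Fintype.card W = Δ + 1 := by
    rw [← h3, card_erase_add_one (mem_univ _), card_univ]
  refine ⟨hcard, v₀, hd, fun w hw => ?_⟩
  have hδw : δ ≤ Γ.degree w := hmin ▸ Γ.minDegree_le_degree w
  by_contra hne
  have hlt : ∑ w ∈ univ.erase v₀, h δ < ∑ w ∈ univ.erase v₀, h (Γ.degree w) := by
    refine sum_lt_sum hge ⟨w, mem_erase.2 ⟨hw, mem_univ _⟩, hstrict.trans_le (hmono ?_)⟩
    omega
  rw [sum_const, h3, nsmul_eq_mul] at hlt
  linarith

theorem stmt_2 {V : Type} [Fintype V] (G : SimpleGraph V) [DecidableRel G.Adj]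
    (δ Δ : ℕ) (hδ1 : 1 ≤ δ) (hδΔ : δ ≤ Δ) (hpar : Even (Δ * (δ + 1)))
    (h : ℕ → ℝ) (hpos : ∀ n, 0 < h n) (hmono : Monotone h)
    (hstrict : h δ < h (δ + 1))
    (hmin : G.minDegree = δ) (hmax : G.maxDegree = Δ) :
    (∀ (W : Type) [Fintype W] (Γ : SimpleGraph W) [DecidableRel Γ.Adj],
        Γ.minDegree = δ → Γ.maxDegree = Δ →
        ∑ u : V, h (G.degree u) ≤ ∑ w : W, h (Γ.degree w)) ↔
      (Fintype.card V = Δ + 1 ∧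
        ((δ < Δ ∧ (univ.filter fun v => G.degree v = δ).card = Δ ∧
            (univ.filter fun v => G.degree v = Δ).card = 1) ∨
          (δ = Δ ∧ Nonempty (G ≃g (⊤ : SimpleGraph (Fin (Δ + 1))))))) := by
  classical
  constructor
  · intro hG
    obtain ⟨W, _, Γ, h1, h2, h3⟩ := exists_extremal δ Δ hδ1 hδΔ hpar h
    obtain ⟨hcard, v₀, hv₀, hother⟩ :=
      eq_case G δ Δ hδ1 h hpos hmono hstrict hmin hmax ((hG W Γ h1 h2).trans h3.le)
    refine ⟨hcard, ?_⟩
    rcases hδΔ.lt_or_eq with hlt | heq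
    · refine Or.inl ⟨hlt, ?_, ?_⟩
      · have : (univ.filter fun v => G.degree v = δ) = univ.erase v₀ := by
          ext v
          simp only [mem_filter, mem_univ, true_and, mem_erase, and_true]
          refine ⟨?_, hother v⟩
          rintro hv rfl
          omega
        rw [this, card_erase_of_mem (mem_univ _), card_univ, hcard, Nat.add_sub_cancel]
      · rw [card_eq_one]
        refine ⟨v₀, ?_⟩
        ext v
        simp only [mem_filter, mem_univ, true_and, mem_singleton]
        constructor
        · intro hv
          by_contra hne
          have := hother v hne
          omega
        · rintro rfl
          exact hv₀
    · refine Or.inr ⟨heq, ?_⟩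
      have hall : ∀ v, G.degree v = Δ := fun v => by
        by_cases hv : v = v₀
        · rw [hv, hv₀]
        · rw [hother v hv, heq]
      -- Every vertex is adjacent to all `Δ` others, so `G` is complete.
      have htop : G = ⊤ := by
        ext u v
        rw [SimpleGraph.top_adj]
        refine ⟨fun huv => huv.ne, fun huv => ?_⟩
        have hsub : G.neighborFinset u ⊆ univ.erase u := by
          intro w hw
          rw [SimpleGraph.mem_neighborFinset] at hw
          exact mem_erase.2 ⟨hw.ne', mem_univ _⟩
        have := eq_of_subset_of_card_le hsub (by
          rw [SimpleGraph.card_neighborFinset_eq_degree, hall,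
            card_erase_of_mem (mem_univ _), card_univ, hcard, Nat.add_sub_cancel])
        rw [← SimpleGraph.mem_neighborFinset, this]
        exact mem_erase.2 ⟨huv.symm, mem_univ _⟩
      rw [htop]
      exact ⟨SimpleGraph.Iso.completeGraph (Fintype.equivFinOfCardEq hcard)⟩
  · rintro ⟨hcard, hcase⟩ W _ Γ _ h1 h2
    refine le_trans (le_of_eq ?_) (lower_bound Γ δ Δ hδ1 h hpos hmono h1 h2)
    rcases hcase with ⟨hlt, hcδ, hcΔ⟩ | ⟨heq, -⟩
    · -- The vertices of degree `δ` and `Δ` already exhaust the `Δ + 1` vertices.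
      have hdisj : Disjoint (univ.filter fun v => G.degree v = δ)
          (univ.filter fun v => G.degree v = Δ) := by
        rw [Finset.disjoint_left]
        intro a
        simp only [mem_filter, mem_univ, true_and]
        omega
      have hunion : (univ.filter fun v => G.degree v = δ) ∪
          (univ.filter fun v => G.degree v = Δ) = univ := by
        apply eq_univ_of_card
        rw [card_union_of_disjoint hdisj, hcδ, hcΔ, hcard]
      have hsum (d : ℕ) : ∑ v ∈ univ.filter (fun v => G.degree v = d), h (G.degree v) =
          (univ.filter fun v => G.degree v = d).card * h d := by
        rw [← nsmul_eq_mul]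
        exact sum_eq_card_nsmul fun v hv => by rw [(mem_filter.1 hv).2]
      rw [← hunion, sum_union hdisj, hsum, hsum, hcδ, hcΔ]
      simp
    · have hall : ∀ v, G.degree v = Δ := fun v =>
        le_antisymm (hmax ▸ G.degree_le_maxDegree v) (heq ▸ hmin ▸ G.minDegree_le_degree v)
      simp only [hall, sum_const, card_univ, hcard, nsmul_eq_mul, heq]
      push_cast
      ring
end

section
/- Let 1 ≤ δ < Δ be integers with δ even, and let h̃ : ℤ⁺ → ℝ⁺ be a positive non-increasing function. If G is a finite simple graph with minimum vertex degree δ and maximum vertex degree Δ, then J(G) = Σ_{u∈V(G)} h̃(d_u) ≥ min{ δ·h̃(Δ) + (Δ−δ)·h̃(Δ−1) + h̃(δ), (Δ+1)·h̃(Δ) + h̃(δ) }. -/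
open Finset

/-! Fix a vertex `v` of minimum degree `δ`; every other vertex contributes at least `h Δ`.
A vertex of degree `Δ` forces `|V| ≥ Δ + 1`. If `|V| ≥ Δ + 2`, the other `|V| - 1 ≥ Δ + 1` vertices
give the second bound. If `|V| = Δ + 1`, each of the `Δ - δ` vertices not adjacent to `v` misses
`v` and itself, so it has degree at most `Δ - 1`, and together with the `δ` neighbours of `v` they
give the first bound. -/

theorem stmt_3 {V : Type} [Fintype V] (G : SimpleGraph V) [DecidableRel G.Adj]
    (δ Δ : ℕ) (hδ1 : 1 ≤ δ) (hδΔ : δ < Δ) (hδeven : Even δ)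
    (h : ℕ → ℝ) (hpos : ∀ n, 0 < h n) (hanti : Antitone h)
    (hmin : G.minDegree = δ) (hmax : G.maxDegree = Δ) :
    min ((δ : ℝ) * h Δ + ((Δ : ℝ) - (δ : ℝ)) * h (Δ - 1) + h δ)
        (((Δ : ℝ) + 1) * h Δ + h δ) ≤ ∑ u : V, h (G.degree u) := by
  classical
  -- On the empty type `minDegree` is `0`, which `1 ≤ δ` excludes.
  have hne : Nonempty V := by
    by_contra hV
    rw [not_nonempty_iff] at hV
    have := G.minDegree_of_subsingleton
    omega
  obtain ⟨v, hv⟩ := G.exists_minimal_degree_vertex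
  obtain ⟨w, hw⟩ := G.exists_maximal_degree_vertex
  have hvδ : G.degree v = δ := by omega
  have hcard : Δ < Fintype.card V := by
    have := G.degree_lt_card_verts w
    omega
  have hΔ (u : V) : h Δ ≤ h (G.degree u) := hanti (hmax ▸ G.degree_le_maxDegree u)
  rw [← add_sum_erase univ _ (mem_univ v), hvδ]
  have hcardErase : (univ.erase v).card = Fintype.card V - 1 := by
    rw [card_erase_of_mem (mem_univ v), card_univ]
  rcases Nat.lt_or_ge (Δ + 1) (Fintype.card V) with hbig | hsmall
  · refine (min_le_right _ _).trans ?_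
    have hsum : ((univ.erase v).card : ℝ) * h Δ ≤ ∑ u ∈ univ.erase v, h (G.degree u) := by
      simpa using card_nsmul_le_sum (univ.erase v) (fun u => h (G.degree u)) (h Δ)
        (fun u _ => hΔ u)
    have hle : (Δ : ℝ) + 1 ≤ ((univ.erase v).card : ℝ) := by
      rw [hcardErase]
      exact_mod_cast (by omega : Δ + 1 ≤ Fintype.card V - 1)
    have := mul_le_mul_of_nonneg_right hle (hpos Δ).le
    linarith
  · refine (min_le_left _ _).trans ?_
    have hsub : G.neighborFinset v ⊆ univ.erase v := by
      intro u hu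
      rw [SimpleGraph.mem_neighborFinset] at hu
      simp [hu.ne']
    rw [← sum_sdiff hsub]
    have hnbr : (δ : ℝ) * h Δ ≤ ∑ u ∈ G.neighborFinset v, h (G.degree u) := by
      simpa [hvδ] using card_nsmul_le_sum (G.neighborFinset v) (fun u => h (G.degree u)) (h Δ)
        (fun u _ => hΔ u)
    have hcardNon : (univ.erase v \ G.neighborFinset v).card = Δ - δ := by
      rw [card_sdiff_of_subset hsub, hcardErase, G.card_neighborFinset_eq_degree, hvδ]
      omega
    have hdeg : ∀ u ∈ univ.erase v \ G.neighborFinset v, h (Δ - 1) ≤ h (G.degree u) := by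
      intro u hu
      simp only [mem_sdiff, mem_erase, mem_univ, and_true, SimpleGraph.mem_neighborFinset] at hu
      apply hanti
      have hnsub : G.neighborFinset u ⊆ (univ.erase v).erase u := by
        intro x hx
        rw [SimpleGraph.mem_neighborFinset] at hx
        have hxv : x ≠ v := fun hxv => hu.2 (hxv ▸ hx.symm)
        simp [hx.ne', hxv]
      have := card_le_card hnsub
      rw [card_erase_of_mem (by simp [hu.1]), hcardErase, G.card_neighborFinset_eq_degree] at this
      omega
    have hnon := card_nsmul_le_sum _ (fun u => h (G.degree u)) (h (Δ - 1)) hdeg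
    rw [hcardNon, nsmul_eq_mul, Nat.cast_sub hδΔ.le] at hnon
    linarith
end

section
/- Let 1 ≤ δ < Δ be integers and let h̃ : ℤ⁺ → ℝ⁺ be a positive non-increasing function. Suppose either (δ is odd and Δ is even) or (δΔ is odd and 2·h̃(Δ) > h̃(Δ−1)). If G is a finite simple graph with minimum vertex degree δ and maximum vertex degree Δ, then J(G) = Σ_{u∈V(G)} h̃(d_u) ≥ min{ δ·h̃(Δ) + (Δ−δ)·h̃(Δ−1) + h̃(δ), Δ·h̃(Δ) + h̃(Δ−1) + h̃(δ) }. -/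
/-!
Fix a vertex `w` of degree `δ` and let `n` be the order of the graph, so `n ≥ Δ + 1`.

* If `n = Δ + 1`, each of the `Δ - δ` non-neighbours of `w` has degree at most `n - 2 = Δ - 1`,
  and the `δ` neighbours have degree at most `Δ`; this gives the first term of the minimum.
* If `n ≥ Δ + 2` and some `u ≠ w` has degree below `Δ`, the vertices `w`, `u` and `Δ` further ones
  give the second term.
* If `n ≥ Δ + 2` and every `u ≠ w` has degree `Δ`, the handshake lemma makes `δ + (n - 1) Δ` even.
  As `δ` is odd, both `Δ` and `n - 1` are odd, so `n - 1 ≥ Δ + 2`, and the two surplus vertices of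
  degree `Δ` pay for `h (Δ - 1)` because `h (Δ - 1) < 2 h Δ`.
-/

open Finset

theorem stmt_4 {V : Type} [Fintype V] (G : SimpleGraph V) [DecidableRel G.Adj]
    (δ Δ : ℕ) (hδ1 : 1 ≤ δ) (hδΔ : δ < Δ)
    (h : ℕ → ℝ) (hpos : ∀ n, 0 < h n) (hanti : Antitone h)
    (hcase : (Odd δ ∧ Even Δ) ∨ (Odd (δ * Δ) ∧ h (Δ - 1) < 2 * h Δ))
    (hmin : G.minDegree = δ) (hmax : G.maxDegree = Δ) :
    min ((δ : ℝ) * h Δ + ((Δ : ℝ) - (δ : ℝ)) * h (Δ - 1) + h δ)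
        ((Δ : ℝ) * h Δ + h (Δ - 1) + h δ) ≤ ∑ u : V, h (G.degree u) := by
  classical
  have hne : Nonempty V := by
    by_contra hV
    rw [not_nonempty_iff] at hV
    have : G.minDegree = 0 := by simp [SimpleGraph.minDegree]
    omega
  obtain ⟨w, hw⟩ := G.exists_minimal_degree_vertex
  have hwδ : G.degree w = δ := by rw [← hw, hmin]
  have hle : ∀ u, G.degree u ≤ Δ := fun u => hmax ▸ G.degree_le_maxDegree u
  have hn : Δ + 1 ≤ Fintype.card V := by
    have := G.maxDegree_lt_card_verts
    omega
  have hδodd : Odd δ := by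
    rcases hcase with hc | hc
    · exact hc.1
    · exact (Nat.odd_mul.1 hc.1).1
  have hcardw : (univ.erase w).card = Fintype.card V - 1 := by
    rw [card_erase_of_mem (mem_univ _), card_univ]
  have hsplit : ∑ u : V, h (G.degree u) = h δ + ∑ u ∈ univ.erase w, h (G.degree u) := by
    rw [← hwδ]
    exact (add_sum_erase univ (fun u => h (G.degree u)) (mem_univ w)).symm
  rcases Nat.lt_or_ge (Δ + 1) (Fintype.card V) with hn2 | hn2
  · refine (min_le_right _ _).trans ?_
    rw [hsplit]
    by_cases hex : ∃ u, u ≠ w ∧ G.degree u ≤ Δ - 1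
    · obtain ⟨u, huw, hu⟩ := hex
      have humem : u ∈ univ.erase w := mem_erase.2 ⟨huw, mem_univ _⟩
      rw [← add_sum_erase _ (fun u => h (G.degree u)) humem]
      have h1 : h (Δ - 1) ≤ h (G.degree u) := hanti hu
      have h2 := card_nsmul_le_sum ((univ.erase w).erase u) (fun u => h (G.degree u)) (h Δ)
        (fun x _ => hanti (hle x))
      rw [card_erase_of_mem humem, hcardw, nsmul_eq_mul] at h2
      have h3 : (Δ : ℝ) ≤ ((Fintype.card V - 1 - 1 : ℕ) : ℝ) := by
        exact_mod_cast (by omega : Δ ≤ Fintype.card V - 1 - 1)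
      have h4 := mul_le_mul_of_nonneg_right h3 (hpos Δ).le
      linarith
    · push Not at hex
      have hdeg : ∀ u ∈ univ.erase w, G.degree u = Δ := by
        intro u hu
        have h1 := hex u (mem_erase.1 hu).1
        have h2 := hle u
        omega
      have hsum : δ + (Fintype.card V - 1) * Δ = 2 * G.edgeFinset.card := by
        rw [← G.sum_degrees_eq_twice_card_edges, ← add_sum_erase univ _ (mem_univ w),
          sum_congr rfl hdeg, sum_const, hcardw, hwδ, smul_eq_mul]
      have hodd : Odd ((Fintype.card V - 1) * Δ) := by
        rw [Nat.odd_iff] at hδodd ⊢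
        omega
      obtain ⟨hodd1, hodd2⟩ := Nat.odd_mul.1 hodd
      have hh : h (Δ - 1) < 2 * h Δ := by
        rcases hcase with hc | hc
        · exact absurd hc.2 (Nat.not_even_iff_odd.2 hodd2)
        · exact hc.2
      have h3 : ((Δ + 2 : ℕ) : ℝ) ≤ ((Fintype.card V - 1 : ℕ) : ℝ) := by
        rw [Nat.odd_iff] at hodd1 hodd2
        exact_mod_cast (by omega : Δ + 2 ≤ Fintype.card V - 1)
      have h4 := mul_le_mul_of_nonneg_right h3 (hpos Δ).le
      rw [sum_congr rfl (fun u hu => congrArg h (hdeg u hu)), sum_const, hcardw, nsmul_eq_mul]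
      push_cast at h4 ⊢
      linarith
  · refine (min_le_left _ _).trans ?_
    have hsub : G.neighborFinset w ⊆ univ.erase w := fun u hu =>
      mem_erase.2 ⟨((G.mem_neighborFinset w u).1 hu).ne', mem_univ _⟩
    rw [hsplit, ← sum_sdiff hsub]
    have h1 := card_nsmul_le_sum (G.neighborFinset w) (fun u => h (G.degree u)) (h Δ)
      (fun x _ => hanti (hle x))
    have h2 := card_nsmul_le_sum (univ.erase w \ G.neighborFinset w) (fun u => h (G.degree u))
      (h (Δ - 1)) (by
        intro x hx
        apply hanti
        simp only [mem_sdiff, mem_erase, mem_univ, and_true, SimpleGraph.mem_neighborFinset] at hx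
        -- A vertex other than `w` and not adjacent to it has all its neighbours outside `{x, w}`.
        have hs : G.neighborFinset x ⊆ (univ.erase w).erase x := by
          intro y hy
          rw [SimpleGraph.mem_neighborFinset] at hy
          refine mem_erase.2 ⟨hy.ne', mem_erase.2 ⟨?_, mem_univ _⟩⟩
          rintro rfl
          exact hx.2 hy.symm
        have := card_le_card hs
        rw [card_erase_of_mem (mem_erase.2 ⟨hx.1, mem_univ _⟩), hcardw,
          G.card_neighborFinset_eq_degree] at this
        omega)
    rw [card_sdiff_of_subset hsub, hcardw, G.card_neighborFinset_eq_degree, hwδ,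
      show Fintype.card V - 1 - δ = Δ - δ by omega, nsmul_eq_mul, Nat.cast_sub hδΔ.le] at h2
    rw [G.card_neighborFinset_eq_degree, hwδ, nsmul_eq_mul] at h1
    linarith
end

section
/- Let 1 ≤ δ < Δ be integers with δΔ odd, and let h̃ : ℤ⁺ → ℝ⁺ be a positive non-increasing function with 2·h̃(Δ) ≤ h̃(Δ−1). If G is a finite simple graph with minimum vertex degree δ and maximum vertex degree Δ, then J(G) = Σ_{u∈V(G)} h̃(d_u) ≥ min{ δ·h̃(Δ) + (Δ−δ)·h̃(Δ−1) + h̃(δ), (Δ+2)·h̃(Δ) + h̃(δ) }. -/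
/-!
Fix a vertex `w` of degree `δ`; it contributes `h δ`, and every other vertex contributes at least
`h Δ`. Let `n` be the number of vertices, so `n ≥ Δ + 1`.

* If `n ≥ Δ + 3`, the other vertices already contribute `(Δ + 2) * h Δ`.
* If `n = Δ + 2`, then `n` is odd because `Δ` is, so by the handshake lemma some vertex `x` has even
  degree. As `δ` and `Δ` are odd, `x ≠ w` and `x` has degree at most `Δ - 1`, so it contributes at
  least `h (Δ - 1) ≥ 2 * h Δ`; the remaining `Δ` vertices contribute at least `Δ * h Δ`.
* If `n = Δ + 1`, each of the `Δ - δ` vertices other than `w` not adjacent to `w` has degree at most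
  `n - 2 = Δ - 1`, so it contributes at least `h (Δ - 1)`; the `δ` neighbours of `w` contribute at
  least `h Δ` each.
-/

open Finset

theorem stmt_5 {V : Type} [Fintype V] (G : SimpleGraph V) [DecidableRel G.Adj]
    (δ Δ : ℕ) (hδ1 : 1 ≤ δ) (hδΔ : δ < Δ) (hodd : Odd (δ * Δ))
    (h : ℕ → ℝ) (hpos : ∀ n, 0 < h n) (hanti : Antitone h)
    (hcond : 2 * h Δ ≤ h (Δ - 1))
    (hmin : G.minDegree = δ) (hmax : G.maxDegree = Δ) :
    min ((δ : ℝ) * h Δ + ((Δ : ℝ) - (δ : ℝ)) * h (Δ - 1) + h δ)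
        (((Δ : ℝ) + 2) * h Δ + h δ) ≤ ∑ u : V, h (G.degree u) := by
  classical
  obtain ⟨hδo, hΔo⟩ := Nat.odd_mul.mp hodd
  have hne : Nonempty V := by
    by_contra hV
    rw [not_nonempty_iff] at hV
    have h0 : G.maxDegree = 0 := by simp
    omega
  obtain ⟨w, hw⟩ := G.exists_minimal_degree_vertex
  have hwδ : G.degree w = δ := by omega
  have hle : ∀ u, G.degree u ≤ Δ := fun u => hmax ▸ G.degree_le_maxDegree u
  have hge : ∀ u, h Δ ≤ h (G.degree u) := fun u => hanti (hle u)
  have hcard : Δ + 1 ≤ Fintype.card V := by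
    have := G.maxDegree_lt_card_verts
    omega
  have hsplit : ∑ u : V, h (G.degree u) = h δ + ∑ u ∈ univ.erase w, h (G.degree u) := by
    rw [← Finset.add_sum_erase univ _ (mem_univ w), hwδ]
  have hconst : ∀ s : Finset V, (#s : ℝ) * h Δ ≤ ∑ u ∈ s, h (G.degree u) := fun s => by
    simpa using Finset.card_nsmul_le_sum s (fun u => h (G.degree u)) (h Δ) (fun u _ => hge u)
  have hce : #(univ.erase w) = Fintype.card V - 1 := by
    rw [Finset.card_erase_of_mem (mem_univ w), Finset.card_univ]
  rw [hsplit]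
  rcases Nat.lt_or_ge (Δ + 2) (Fintype.card V) with h3 | h3
  · refine (min_le_right _ _).trans ?_
    have h1 := hconst (univ.erase w)
    have h2 : ((Δ + 2 : ℕ) : ℝ) ≤ (#(univ.erase w) : ℝ) := by
      rw [Nat.cast_le]
      omega
    push_cast at h2
    have h4 := mul_le_mul_of_nonneg_right h2 (hpos Δ).le
    linarith
  rcases Nat.lt_or_ge (Δ + 1) (Fintype.card V) with h2 | h2
  · refine (min_le_right _ _).trans ?_
    obtain ⟨x, hx⟩ : ∃ x, ¬ Odd (G.degree x) := by
      by_contra! hall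
      have hev := G.even_card_odd_degree_vertices
      rw [Finset.filter_true_of_mem (fun u _ => hall u), Finset.card_univ] at hev
      obtain ⟨a, ha⟩ := hev
      obtain ⟨b, hb⟩ := hΔo
      omega
    have hxw : x ≠ w := by
      rintro rfl
      exact hx (hwδ ▸ hδo)
    have hxΔ : G.degree x ≤ Δ - 1 := by
      have h1 := hle x
      have h4 : G.degree x ≠ Δ := fun e => hx (e ▸ hΔo)
      omega
    have hxe : x ∈ univ.erase w := by simp [hxw]
    rw [← Finset.add_sum_erase _ _ hxe]
    have h1 := hconst ((univ.erase w).erase x)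
    have h4 : #((univ.erase w).erase x) = Δ := by
      rw [Finset.card_erase_of_mem hxe, hce]
      omega
    rw [h4] at h1
    have h5 := hanti hxΔ
    linarith
  · refine (min_le_left _ _).trans ?_
    rw [← Finset.sum_filter_add_sum_filter_not (univ.erase w) (fun u => G.Adj w u)]
    have hN : #((univ.erase w).filter (fun u => G.Adj w u)) = δ := by
      rw [← hwδ, ← G.card_neighborFinset_eq_degree]
      congr 1
      ext u
      simp only [mem_filter, mem_erase, mem_univ, and_true, SimpleGraph.mem_neighborFinset,
        and_iff_right_iff_imp]
      exact fun hu => hu.ne'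
    have hM : #((univ.erase w).filter (fun u => ¬ G.Adj w u)) = Δ - δ := by
      have := Finset.card_filter_add_card_filter_not (s := univ.erase w) (fun u => G.Adj w u)
      omega
    have h1 := hconst ((univ.erase w).filter (fun u => G.Adj w u))
    have h4 := Finset.card_nsmul_le_sum ((univ.erase w).filter (fun u => ¬ G.Adj w u))
      (fun u => h (G.degree u)) (h (Δ - 1)) (fun u hu => by
        simp only [mem_filter, mem_erase, mem_univ, and_true] at hu
        apply hanti
        -- the neighbours of `u` avoid both `u` and `w`
        have hsub : G.neighborFinset u ⊆ (univ.erase w).erase u := fun v hv => by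
          rw [SimpleGraph.mem_neighborFinset] at hv
          simp only [mem_erase, mem_univ, and_true]
          refine ⟨hv.ne', ?_⟩
          rintro rfl
          exact hu.2 hv.symm
        have h6 := Finset.card_le_card hsub
        rw [G.card_neighborFinset_eq_degree,
          Finset.card_erase_of_mem (by simp [hu.1]), hce] at h6
        omega)
    rw [hM, nsmul_eq_mul, Nat.cast_sub hδΔ.le] at h4
    rw [hN] at h1
    linarith
end

section
/- Let α be a real number with α > 0, let 1 ≤ δ ≤ Δ be integers, and let G be a finite simple graph with minimum vertex degree δ and maximum vertex degree Δ. If Δ(δ+1) is even, then M₁^α(G) = Σ_{u∈V(G)} d_u^{2α} ≥ Δ·δ^{2α} + Δ^{2α}. -/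
open Finset

theorem stmt_6 {V : Type} [Fintype V] (G : SimpleGraph V) [DecidableRel G.Adj]
    (α : ℝ) (hα : 0 < α) (δ Δ : ℕ) (hδ1 : 1 ≤ δ) (hδΔ : δ ≤ Δ)
    (hmin : G.minDegree = δ) (hmax : G.maxDegree = Δ)
    (hpar : Even (Δ * (δ + 1))) :
    (Δ : ℝ) * (δ : ℝ) ^ (2 * α) + (Δ : ℝ) ^ (2 * α) ≤
      ∑ u : V, (G.degree u : ℝ) ^ (2 * α) := by
  have hne : Nonempty V := by
    by_contra h
    rw [not_nonempty_iff] at h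
    have h0 : G.maxDegree = 0 := by simp [SimpleGraph.maxDegree]
    omega
  -- A vertex of maximum degree contributes `Δ ^ (2α)`, and each of its `Δ` neighbors at
  -- least `δ ^ (2α)`; the remaining terms are nonnegative.
  obtain ⟨v, hv⟩ := G.exists_maximal_degree_vertex
  have hvΔ : G.degree v = Δ := by omega
  have hv_notMem : v ∉ G.neighborFinset v := by simp
  have hnbrs : (Δ : ℝ) * (δ : ℝ) ^ (2 * α) ≤
      ∑ u ∈ G.neighborFinset v, (G.degree u : ℝ) ^ (2 * α) := by
    rw [← hvΔ, ← G.card_neighborFinset_eq_degree, ← nsmul_eq_mul]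
    refine Finset.card_nsmul_le_sum _ _ _ fun u _ => ?_
    have hu : δ ≤ G.degree u := hmin ▸ G.minDegree_le_degree u
    exact Real.rpow_le_rpow (by positivity) (by exact_mod_cast hu) (by positivity)
  calc (Δ : ℝ) * (δ : ℝ) ^ (2 * α) + (Δ : ℝ) ^ (2 * α)
      ≤ ∑ u ∈ Finset.cons v (G.neighborFinset v) hv_notMem,
          (G.degree u : ℝ) ^ (2 * α) := by
        rw [Finset.sum_cons, hvΔ]
        linarith
    _ ≤ ∑ u : V, (G.degree u : ℝ) ^ (2 * α) :=
        Finset.sum_le_sum_of_subset_of_nonneg (Finset.subset_univ _)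
          fun _ _ _ => by positivity
end

section
/- Let α be a real number with α > 0, let 1 ≤ δ ≤ Δ be integers, and let G be a finite simple graph with minimum vertex degree δ and maximum vertex degree Δ. If Δ(δ+1) is odd, then M₁^α(G) = Σ_{u∈V(G)} d_u^{2α} ≥ (Δ−1)·δ^{2α} + (δ+1)^{2α} + Δ^{2α}. -/
open Finset

/-! The parity hypothesis says that `Δ` is odd and `δ` is even. Let `v` be a vertex of degree `Δ`.
If every other vertex had degree `δ`, all degrees except the one at `v` would be even, so the
degree sum would be odd, against the handshake lemma. Hence some `w ≠ v` has degree at least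
`δ + 1`. At least `Δ - 1` vertices remain (as `|V| ≥ Δ + 1`), each of degree at least `δ`, and
the bound follows since `x ↦ x ^ (2α)` is increasing and nonnegative on `x ≥ 0`. -/

theorem stmt_7 {V : Type} [Fintype V] (G : SimpleGraph V) [DecidableRel G.Adj]
    (α : ℝ) (hα : 0 < α) (δ Δ : ℕ) (hδ1 : 1 ≤ δ) (hδΔ : δ ≤ Δ)
    (hmin : G.minDegree = δ) (hmax : G.maxDegree = Δ)
    (hpar : Odd (Δ * (δ + 1))) :
    ((Δ : ℝ) - 1) * (δ : ℝ) ^ (2 * α) + ((δ : ℝ) + 1) ^ (2 * α) + (Δ : ℝ) ^ (2 * α) ≤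
      ∑ u : V, (G.degree u : ℝ) ^ (2 * α) := by
  classical
  have hne : Nonempty V := by
    by_contra h
    rw [not_nonempty_iff] at h
    have : G.minDegree = 0 := by simp
    omega
  obtain ⟨hΔ, hδ⟩ := Nat.odd_mul.mp hpar
  have hδe : Even δ := by
    rcases Nat.even_or_odd δ with h | h
    · exact h
    · exact absurd hδ (by simpa using h.add_one)
  obtain ⟨v, hv⟩ := G.exists_maximal_degree_vertex
  have hvΔ : G.degree v = Δ := by omega
  have hlow : ∀ u, δ ≤ G.degree u := fun u => hmin ▸ G.minDegree_le_degree u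
  have hw : ∃ w, w ≠ v ∧ G.degree w ≠ δ := by
    by_contra! h
    have hsum := G.sum_degrees_eq_twice_card_edges
    rw [← Finset.add_sum_erase _ _ (Finset.mem_univ v),
      Finset.sum_congr rfl (fun u hu => h u (Finset.ne_of_mem_erase hu)), hvΔ,
      Finset.sum_const, smul_eq_mul] at hsum
    have hodd : Odd (Δ + #((univ : Finset V).erase v) * δ) := hΔ.add_even (hδe.mul_left _)
    rw [hsum] at hodd
    exact (Nat.not_odd_iff_even.mpr (even_two_mul _)) hodd
  obtain ⟨w, hwv, hwδ⟩ := hw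
  have hwdeg : δ + 1 ≤ G.degree w := by have := hlow w; omega
  have hwmem : w ∈ (univ : Finset V).erase v := by simp [hwv]
  rw [← Finset.add_sum_erase _ _ (Finset.mem_univ v), ← Finset.add_sum_erase _ _ hwmem, hvΔ]
  have hcard : Δ ≤ #(((univ : Finset V).erase v).erase w) + 1 := by
    rw [Finset.card_erase_add_one hwmem, Finset.card_erase_of_mem (Finset.mem_univ v),
      Finset.card_univ]
    have := G.degree_lt_card_verts v
    omega
  have hcardR : (Δ : ℝ) - 1 ≤ #(((univ : Finset V).erase v).erase w) := by
    have : (Δ : ℝ) ≤ #(((univ : Finset V).erase v).erase w) + 1 := by exact_mod_cast hcard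
    linarith
  have hrest : ((Δ : ℝ) - 1) * (δ : ℝ) ^ (2 * α) ≤
      ∑ u ∈ ((univ : Finset V).erase v).erase w, (G.degree u : ℝ) ^ (2 * α) := by
    calc ((Δ : ℝ) - 1) * (δ : ℝ) ^ (2 * α)
        ≤ #(((univ : Finset V).erase v).erase w) * (δ : ℝ) ^ (2 * α) := by gcongr
      _ = ∑ _u ∈ ((univ : Finset V).erase v).erase w, (δ : ℝ) ^ (2 * α) := by simp
      _ ≤ _ := Finset.sum_le_sum fun u _ =>
        Real.rpow_le_rpow (by positivity) (by exact_mod_cast hlow u) (by positivity)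
  have hwterm : ((δ : ℝ) + 1) ^ (2 * α) ≤ (G.degree w : ℝ) ^ (2 * α) :=
    Real.rpow_le_rpow (by positivity) (by exact_mod_cast hwdeg) (by positivity)
  linarith
end

section
/- Let α be a real number with α < 0, let 1 ≤ δ < Δ be integers with δ even, and let G be a finite simple graph with minimum vertex degree δ and maximum vertex degree Δ. Then M₁^α(G) = Σ_{u∈V(G)} d_u^{2α} ≥ min{ δ·Δ^{2α} + (Δ−δ)·(Δ−1)^{2α} + δ^{2α}, (Δ+1)·Δ^{2α} + δ^{2α} }. -/
/-!
Fix a vertex `v` of minimum degree `δ`; it contributes `δ ^ (2α)`. Since `2α < 0`, every other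
vertex contributes at least `Δ ^ (2α)`. A vertex of maximum degree forces at least `Δ + 1` vertices.
If there are at least `Δ + 2` of them, the second expression in the minimum is a lower bound.
If there are exactly `Δ + 1`, each of the `Δ - δ` vertices other than `v` not adjacent to `v` has
degree at most `Δ - 1`, so it contributes at least `(Δ - 1) ^ (2α)`, which gives the first expression.
-/

open Finset

theorem stmt_8 {V : Type} [Fintype V] (G : SimpleGraph V) [DecidableRel G.Adj]
    (α : ℝ) (hα : α < 0) (δ Δ : ℕ) (hδ1 : 1 ≤ δ) (hδΔ : δ < Δ) (hδeven : Even δ)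
    (hmin : G.minDegree = δ) (hmax : G.maxDegree = Δ) :
    min ((δ : ℝ) * (Δ : ℝ) ^ (2 * α) + ((Δ : ℝ) - (δ : ℝ)) * ((Δ : ℝ) - 1) ^ (2 * α)
          + (δ : ℝ) ^ (2 * α))
        (((Δ : ℝ) + 1) * (Δ : ℝ) ^ (2 * α) + (δ : ℝ) ^ (2 * α)) ≤
      ∑ u : V, (G.degree u : ℝ) ^ (2 * α) := by
  classical
  have hne : Nonempty V := by
    by_contra h
    rw [not_nonempty_iff] at h
    have := G.maxDegree_of_subsingleton
    omega
  obtain ⟨v, hv⟩ := G.exists_minimal_degree_vertex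
  obtain ⟨w, hw⟩ := G.exists_maximal_degree_vertex
  have hcard : Δ < Fintype.card V := by
    have := G.degree_lt_card_verts w
    omega
  have hpos : ∀ u, (0 : ℝ) < G.degree u := fun u => by
    have := G.minDegree_le_degree u
    exact_mod_cast (by omega : 0 < G.degree u)
  have hΔ : ∀ u, (Δ : ℝ) ^ (2 * α) ≤ (G.degree u : ℝ) ^ (2 * α) := fun u => by
    refine Real.rpow_le_rpow_of_nonpos (hpos u) ?_ (by linarith)
    have := G.degree_le_maxDegree u
    exact_mod_cast (by omega : G.degree u ≤ Δ)
  have hdv : G.degree v = δ := by omega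
  have hcerase : (univ.erase v).card = Fintype.card V - 1 := by
    rw [card_erase_of_mem (mem_univ v), card_univ]
  rw [← add_sum_erase univ _ (mem_univ v), hdv]
  by_cases hn : Δ + 2 ≤ Fintype.card V
  · refine (min_le_right _ _).trans ?_
    have h1 := card_nsmul_le_sum (univ.erase v) (fun u => (G.degree u : ℝ) ^ (2 * α)) _
      (fun u _ => hΔ u)
    rw [nsmul_eq_mul] at h1
    have h2 : ((Δ : ℝ) + 1) ≤ ((univ.erase v).card : ℝ) := by
      exact_mod_cast (by omega : Δ + 1 ≤ (univ.erase v).card)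
    have h3 : (0 : ℝ) ≤ (Δ : ℝ) ^ (2 * α) := by positivity
    have := mul_le_mul_of_nonneg_right h2 h3
    linarith
  · refine (min_le_left _ _).trans ?_
    rw [← sum_filter_add_sum_filter_not (univ.erase v) (fun u => G.Adj v u)]
    have hA : ((univ.erase v).filter (fun u => G.Adj v u)).card = δ := by
      rw [← hdv, ← G.card_neighborFinset_eq_degree]
      congr 1
      ext u
      simp only [mem_filter, mem_erase, mem_univ, and_true, SimpleGraph.mem_neighborFinset]
      exact ⟨fun h => h.2, fun h => ⟨h.ne', h⟩⟩
    have hB : ((univ.erase v).filter (fun u => ¬ G.Adj v u)).card = Δ - δ := by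
      have := card_filter_add_card_filter_not (s := univ.erase v) (fun u => G.Adj v u)
      omega
    have h1 := card_nsmul_le_sum ((univ.erase v).filter (fun u => G.Adj v u))
      (fun u => (G.degree u : ℝ) ^ (2 * α)) _ (fun u _ => hΔ u)
    have h2 := card_nsmul_le_sum ((univ.erase v).filter (fun u => ¬ G.Adj v u))
      (fun u => (G.degree u : ℝ) ^ (2 * α)) (((Δ : ℝ) - 1) ^ (2 * α)) (fun u hu => by
        simp only [mem_filter, mem_erase, mem_univ, and_true] at hu
        refine Real.rpow_le_rpow_of_nonpos (hpos u) ?_ (by linarith)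
        -- The neighbours of `u` avoid both `u` and `v`.
        have hsub : G.neighborFinset u ⊆ (univ.erase v).erase u := fun x hx => by
          rw [SimpleGraph.mem_neighborFinset] at hx
          simp only [mem_erase, mem_univ, and_true]
          exact ⟨hx.ne', fun h => hu.2 (h ▸ hx.symm)⟩
        have hc := card_le_card hsub
        rw [card_erase_of_mem (by simp [hu.1]), G.card_neighborFinset_eq_degree] at hc
        have : G.degree u + 1 ≤ Δ := by omega
        have : (G.degree u : ℝ) + 1 ≤ Δ := by exact_mod_cast this
        linarith)
    rw [nsmul_eq_mul, hA] at h1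
    rw [nsmul_eq_mul, hB, Nat.cast_sub hδΔ.le] at h2
    linarith
end

section
/- Let α be a real number with α < 0, let 1 ≤ δ < Δ be integers, and let G be a finite simple graph with minimum vertex degree δ and maximum vertex degree Δ. Suppose either (δ is odd and Δ is even) or (δΔ is odd and 2·Δ^{2α} > (Δ−1)^{2α}). Then M₁^α(G) = Σ_{u∈V(G)} d_u^{2α} ≥ min{ δ·Δ^{2α} + (Δ−δ)·(Δ−1)^{2α} + δ^{2α}, Δ^{2α+1} + (Δ−1)^{2α} + δ^{2α} }. -/
open Finset

/-!
Write `f x = x ^ (2α)`, a decreasing function, let `n` be the number of vertices and let `v` be a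
vertex of degree `δ`; note `n ≥ Δ + 1`.

* If `n = Δ + 1`, a vertex of degree `Δ` is adjacent to every other vertex, in particular to `v`.
  So among the vertices other than `v`, the `Δ - δ` non-neighbours of `v` have degree at most
  `Δ - 1`, and the sum is at least the first term of the minimum
  (`zagreb_ge_of_card_eq`).
* If `n ≥ Δ + 2` and some vertex `w ≠ v` has degree below `Δ`, then `v`, `w` and the remaining
  `n - 2 ≥ Δ` vertices give the second term.
* If `n ≥ Δ + 2` and every vertex other than `v` has degree `Δ`, the degree sum is
  `δ + (n - 1)Δ`. As it is even and `δ` is odd, both `Δ` and `n - 1` are odd, so `n ≥ Δ + 3`, and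
  the extra inequality `f (Δ - 1) < 2 f Δ` gives the second term.
-/

/-- The case of `Δ + 1` vertices, for an arbitrary weight `f` that is antitone on positive
integers. -/
lemma zagreb_ge_of_card_eq {V : Type} [Fintype V] (G : SimpleGraph V) [DecidableRel G.Adj]
    (f : ℕ → ℝ) (hf : ∀ a b, 1 ≤ a → a ≤ b → f b ≤ f a) (D : ℕ)
    (hpos : ∀ u, 1 ≤ G.degree u) (hle : ∀ u, G.degree u ≤ D)
    (hcard : Fintype.card V = D + 1) (v : V) :
    (G.degree v : ℝ) * f D + ((D : ℝ) - G.degree v) * f (D - 1) + f (G.degree v)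
      ≤ ∑ u : V, f (G.degree u) := by
  classical
  have hnon : ∀ u, u ≠ v → ¬ G.Adj v u → G.degree u ≤ D - 1 := by
    intro u huv hadj
    have h1 : 0 < Gᶜ.degree u := by
      rw [SimpleGraph.degree_pos_iff_exists_adj]
      exact ⟨v, by rw [SimpleGraph.compl_adj]; exact ⟨huv, fun h => hadj h.symm⟩⟩
    rw [SimpleGraph.degree_compl] at h1
    omega
  have hsub : G.neighborFinset v ⊆ univ.erase v := by
    intro u hu
    rw [SimpleGraph.mem_neighborFinset] at hu
    simpa using hu.ne'
  rw [← Finset.add_sum_erase univ _ (mem_univ v), ← Finset.sum_sdiff hsub]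
  have h1 : (G.degree v : ℝ) * f D ≤ ∑ u ∈ G.neighborFinset v, f (G.degree u) := by
    rw [← nsmul_eq_mul, ← SimpleGraph.card_neighborFinset_eq_degree]
    exact Finset.card_nsmul_le_sum _ _ _ fun u _ => hf _ _ (hpos u) (hle u)
  have h2 : ((D : ℝ) - G.degree v) * f (D - 1)
      ≤ ∑ u ∈ univ.erase v \ G.neighborFinset v, f (G.degree u) := by
    have hc : (univ.erase v \ G.neighborFinset v).card = D - G.degree v := by
      rw [Finset.card_sdiff_of_subset hsub, Finset.card_erase_of_mem (mem_univ v),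
        Finset.card_univ, hcard, SimpleGraph.card_neighborFinset_eq_degree]
      omega
    rw [← Nat.cast_sub (hle v), ← nsmul_eq_mul, ← hc]
    refine Finset.card_nsmul_le_sum _ _ _ fun u hu => ?_
    simp only [mem_sdiff, mem_erase, mem_univ, and_true, SimpleGraph.mem_neighborFinset] at hu
    exact hf _ _ (hpos u) (hnon u hu.1 hu.2)
  linarith

theorem stmt_9 {V : Type} [Fintype V] (G : SimpleGraph V) [DecidableRel G.Adj]
    (α : ℝ) (hα : α < 0) (δ Δ : ℕ) (hδ1 : 1 ≤ δ) (hδΔ : δ < Δ)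
    (hcase : (Odd δ ∧ Even Δ) ∨
      (Odd (δ * Δ) ∧ ((Δ : ℝ) - 1) ^ (2 * α) < 2 * (Δ : ℝ) ^ (2 * α)))
    (hmin : G.minDegree = δ) (hmax : G.maxDegree = Δ) :
    min ((δ : ℝ) * (Δ : ℝ) ^ (2 * α) + ((Δ : ℝ) - (δ : ℝ)) * ((Δ : ℝ) - 1) ^ (2 * α)
          + (δ : ℝ) ^ (2 * α))
        ((Δ : ℝ) ^ (2 * α + 1) + ((Δ : ℝ) - 1) ^ (2 * α) + (δ : ℝ) ^ (2 * α)) ≤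
      ∑ u : V, (G.degree u : ℝ) ^ (2 * α) := by
  classical
  have hne : Nonempty V := by
    by_contra h
    rw [not_nonempty_iff] at h
    have : G.maxDegree = 0 := by simp [SimpleGraph.maxDegree]
    omega
  obtain ⟨v, hv⟩ := G.exists_minimal_degree_vertex
  obtain ⟨x, hx⟩ := G.exists_maximal_degree_vertex
  rw [hmin] at hv
  rw [hmax] at hx
  have hlow : ∀ u, 1 ≤ G.degree u := fun u => by
    have := G.minDegree_le_degree u
    omega
  have hup : ∀ u, G.degree u ≤ Δ := fun u => hmax ▸ G.degree_le_maxDegree u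
  have hn : Δ + 1 ≤ Fintype.card V := by
    have := G.degree_lt_card_verts x
    omega
  have hΔ0 : (0 : ℝ) < Δ := by exact_mod_cast (by omega : 0 < Δ)
  rw [Real.rpow_add_one hΔ0.ne', show (Δ : ℝ) - 1 = ((Δ - 1 : ℕ) : ℝ) by
    rw [Nat.cast_sub (by omega)]; simp] at *
  obtain ⟨f, hfdef⟩ : ∃ f : ℕ → ℝ, ∀ k : ℕ, (k : ℝ) ^ (2 * α) = f k := ⟨_, fun _ => rfl⟩
  have hf : ∀ a b, 1 ≤ a → a ≤ b → f b ≤ f a := fun a b ha hab => by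
    rw [← hfdef, ← hfdef]
    exact Real.rpow_le_rpow_of_nonpos (by exact_mod_cast ha) (by exact_mod_cast hab) (by linarith)
  have hfΔ : 0 ≤ f Δ := by rw [← hfdef]; positivity
  simp only [hfdef] at *
  rcases hn.eq_or_lt with hn | hn
  · refine (min_le_left _ _).trans ?_
    have := zagreb_ge_of_card_eq G f hf Δ hlow hup hn.symm v
    rwa [← hv] at this
  refine (min_le_right _ _).trans ?_
  rw [← Finset.add_sum_erase univ _ (mem_univ v), ← hv]
  have hc : (univ.erase v).card = Fintype.card V - 1 := by
    rw [Finset.card_erase_of_mem (mem_univ v), Finset.card_univ]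
  by_cases hw : ∃ w, w ≠ v ∧ G.degree w < Δ
  · obtain ⟨w, hwv, hwd⟩ := hw
    have hwm : w ∈ univ.erase v := by simpa using hwv
    rw [← Finset.add_sum_erase _ _ hwm]
    have h1 : f (Δ - 1) ≤ f (G.degree w) := hf _ _ (hlow w) (by omega)
    have h2 := Finset.card_nsmul_le_sum ((univ.erase v).erase w) (fun u => f (G.degree u)) (f Δ)
      fun u _ => hf _ _ (hlow u) (hup u)
    rw [Finset.card_erase_of_mem hwm, hc, nsmul_eq_mul] at h2
    have h3 : (Δ : ℝ) * f Δ ≤ ((Fintype.card V - 1 - 1 : ℕ) : ℝ) * f Δ :=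
      mul_le_mul_of_nonneg_right (by exact_mod_cast (by omega)) hfΔ
    linarith
  · push Not at hw
    have hall : ∀ u ∈ univ.erase v, G.degree u = Δ := fun u hu =>
      le_antisymm (hup u) (hw u (by simpa using hu))
    have hsum := G.sum_degrees_eq_twice_card_edges
    rw [← Finset.add_sum_erase univ _ (mem_univ v), Finset.sum_congr rfl hall, Finset.sum_const,
      hc, ← hv, smul_eq_mul] at hsum
    have heven : Even (δ + (Fintype.card V - 1) * Δ) := hsum ▸ even_two_mul _
    rcases hcase with ⟨hδo, hΔe⟩ | ⟨ho, hlt⟩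
    · exact absurd heven (Nat.not_even_iff_odd.2 (hδo.add_even (hΔe.mul_left _)))
    · rw [Nat.odd_mul] at ho
      have hodd : Odd ((Fintype.card V - 1) * Δ) := by
        rw [Nat.even_add'] at heven
        exact heven.1 ho.1
      have hno : Odd (Fintype.card V - 1) := (Nat.odd_mul.1 hodd).1
      have hn3 : Δ + 2 ≤ Fintype.card V - 1 := by
        obtain ⟨a, ha⟩ := hno
        obtain ⟨b, hb⟩ := ho.2
        omega
      rw [Finset.sum_congr rfl fun u hu => by rw [hall u hu], Finset.sum_const, hc, nsmul_eq_mul]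
      have h3 : ((Δ : ℝ) + 2) * f Δ ≤ ((Fintype.card V - 1 : ℕ) : ℝ) * f Δ :=
        mul_le_mul_of_nonneg_right (by exact_mod_cast hn3) hfΔ
      linarith
end

section
/- Let α be a real number with α < 0, let 1 ≤ δ < Δ be integers with δΔ odd and 2·Δ^{2α} ≤ (Δ−1)^{2α}, and let G be a finite simple graph with minimum vertex degree δ and maximum vertex degree Δ. Then M₁^α(G) = Σ_{u∈V(G)} d_u^{2α} ≥ min{ δ·Δ^{2α} + (Δ−δ)·(Δ−1)^{2α} + δ^{2α}, (Δ+2)·Δ^{2α} + δ^{2α} }. -/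
/-!
Write `a = Δ^{2α}`, `b = (Δ-1)^{2α}`, `c = δ^{2α}`. As `x ↦ x^{2α}` is antitone, every vertex
contributes at least `a`, and at least `b` if its degree is less than `Δ`. Fix a vertex `u` of degree
`δ`, which contributes `c`, and let `n ≥ Δ + 1` be the number of vertices.

* If `n ≥ Δ + 3`, the other `n - 1 ≥ Δ + 2` vertices contribute at least `a` each.
* If `n = Δ + 2`, then `n` is odd, so by the handshake lemma some vertex has even degree. It differs
  from `u` and has degree less than `Δ`, hence contributes at least `b ≥ 2a`.
* If `n = Δ + 1`, a vertex of degree `Δ` is adjacent to all others, so the `Δ - δ` non-neighbours of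
  `u` other than `u` contribute at least `b` each.
-/

open Finset

theorem stmt_10 {V : Type} [Fintype V] (G : SimpleGraph V) [DecidableRel G.Adj]
    (α : ℝ) (hα : α < 0) (δ Δ : ℕ) (hδ1 : 1 ≤ δ) (hδΔ : δ < Δ) (hodd : Odd (δ * Δ))
    (hcond : 2 * (Δ : ℝ) ^ (2 * α) ≤ ((Δ : ℝ) - 1) ^ (2 * α))
    (hmin : G.minDegree = δ) (hmax : G.maxDegree = Δ) :
    min ((δ : ℝ) * (Δ : ℝ) ^ (2 * α) + ((Δ : ℝ) - (δ : ℝ)) * ((Δ : ℝ) - 1) ^ (2 * α)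
          + (δ : ℝ) ^ (2 * α))
        (((Δ : ℝ) + 2) * (Δ : ℝ) ^ (2 * α) + (δ : ℝ) ^ (2 * α)) ≤
      ∑ u : V, (G.degree u : ℝ) ^ (2 * α) := by
  classical
  obtain ⟨hδo, hΔo⟩ := Nat.odd_mul.mp hodd
  have hne : Nonempty V := by
    by_contra h
    rw [not_nonempty_iff] at h
    have : G.maxDegree = 0 := by simp [SimpleGraph.maxDegree]
    omega
  obtain ⟨u, hu⟩ := G.exists_minimal_degree_vertex
  obtain ⟨w, hw⟩ := G.exists_maximal_degree_vertex
  rw [hmin] at hu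
  rw [hmax] at hw
  have hn : Δ + 1 ≤ Fintype.card V := by
    have := G.degree_lt_card_verts w
    omega
  have hdpos (v : V) : 0 < G.degree v := by
    have := G.minDegree_le_degree v
    omega
  have hA (v : V) : (Δ : ℝ) ^ (2 * α) ≤ (G.degree v : ℝ) ^ (2 * α) := by
    apply Real.rpow_le_rpow_of_nonpos
    · exact_mod_cast hdpos v
    · exact_mod_cast hmax ▸ G.degree_le_maxDegree v
    · linarith
  have hB (v : V) (hv : G.degree v < Δ) :
      ((Δ : ℝ) - 1) ^ (2 * α) ≤ (G.degree v : ℝ) ^ (2 * α) := by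
    apply Real.rpow_le_rpow_of_nonpos
    · exact_mod_cast hdpos v
    · have : (G.degree v : ℝ) + 1 ≤ Δ := by exact_mod_cast hv
      linarith
    · linarith
  have ha : 0 ≤ (Δ : ℝ) ^ (2 * α) := by positivity
  have hsplit : ∑ v : V, (G.degree v : ℝ) ^ (2 * α)
      = (δ : ℝ) ^ (2 * α) + ∑ v ∈ univ.erase u, (G.degree v : ℝ) ^ (2 * α) := by
    rw [← Finset.add_sum_erase _ _ (mem_univ u), ← hu]
  have hcard : (univ.erase u : Finset V).card = Fintype.card V - 1 := by
    rw [card_erase_of_mem (mem_univ u), card_univ]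
  rw [hsplit]
  generalize hadef : (Δ : ℝ) ^ (2 * α) = a at *
  generalize hbdef : ((Δ : ℝ) - 1) ^ (2 * α) = b at *
  generalize hcdef : (δ : ℝ) ^ (2 * α) = c at *
  rcases (by omega : Δ + 3 ≤ Fintype.card V ∨ Fintype.card V = Δ + 2 ∨ Fintype.card V = Δ + 1)
    with h | h | h
  · apply min_le_of_right_le
    have h1 := Finset.card_nsmul_le_sum (univ.erase u) _ a (fun v _ => hA v)
    rw [hcard, nsmul_eq_mul] at h1
    have h2 : (Δ : ℝ) + 2 ≤ ((Fintype.card V - 1 : ℕ) : ℝ) := by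
      exact_mod_cast (by omega : Δ + 2 ≤ Fintype.card V - 1)
    have := mul_le_mul_of_nonneg_right h2 ha
    linarith
  · apply min_le_of_right_le
    obtain ⟨x, hx⟩ : ∃ x, ¬ Odd (G.degree x) := by
      by_contra! hall
      have h1 := G.even_card_odd_degree_vertices
      rw [filter_true_of_mem (fun v _ => hall v), card_univ, h] at h1
      rw [Nat.odd_iff] at hΔo
      rw [Nat.even_iff] at h1
      omega
    have hxu : x ≠ u := by
      rintro rfl
      exact hx (hu ▸ hδo)
    have hxΔ : G.degree x < Δ := by
      refine lt_of_le_of_ne (hmax ▸ G.degree_le_maxDegree x) ?_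
      intro h1
      exact hx (h1 ▸ hΔo)
    have hxm : x ∈ (univ.erase u : Finset V) := by simp [hxu]
    rw [← Finset.add_sum_erase _ _ hxm]
    have h1 := Finset.card_nsmul_le_sum ((univ.erase u).erase x) _ a (fun v _ => hA v)
    rw [card_erase_of_mem hxm, hcard, nsmul_eq_mul, h] at h1
    have h2 := hB x hxΔ
    simp only [Nat.add_one_sub_one] at h1
    linarith
  · apply min_le_of_left_le
    have hsub : G.neighborFinset u ⊆ univ.erase u := by
      intro v hv
      rw [SimpleGraph.mem_neighborFinset] at hv
      simp [hv.ne']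
    rw [← Finset.sum_sdiff hsub]
    have h1 := Finset.card_nsmul_le_sum (G.neighborFinset u) _ a (fun v _ => hA v)
    have h2 := Finset.card_nsmul_le_sum (univ.erase u \ G.neighborFinset u)
      (fun v => (G.degree v : ℝ) ^ (2 * α)) b (fun v hv => hB v (by
        simp only [mem_sdiff, mem_erase, mem_univ, and_true, SimpleGraph.mem_neighborFinset] at hv
        -- `v` is adjacent neither to itself nor to `u`
        have h3 : G.neighborFinset v ⊆ (univ.erase u).erase v := by
          intro y hy
          rw [SimpleGraph.mem_neighborFinset] at hy
          simp only [mem_erase, mem_univ, and_true]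
          refine ⟨hy.ne', ?_⟩
          rintro rfl
          exact hv.2 hy.symm
        have h4 := card_le_card h3
        rw [card_erase_of_mem (by simp [hv.1]), hcard, SimpleGraph.card_neighborFinset_eq_degree]
          at h4
        omega))
    rw [card_sdiff_of_subset hsub, hcard, SimpleGraph.card_neighborFinset_eq_degree, ← hu, h,
      nsmul_eq_mul, Nat.add_sub_cancel, Nat.cast_sub hδΔ.le] at h2
    rw [SimpleGraph.card_neighborFinset_eq_degree, ← hu, nsmul_eq_mul] at h1
    linarith
end

section
/- Let 1 ≤ δ < Δ be integers with Δ(δ+1) even, and let G be a finite simple graph with minimum vertex degree δ and maximum vertex degree Δ. Then Π₁(G) = Π_{u∈V(G)} d_u² ≥ δ^{2Δ}·Δ², NK(G) = Π_{u∈V(G)} d_u ≥ δ^{Δ}·Δ, and NK*(G) = Π_{u∈V(G)} d_u^{d_u} ≥ δ^{δΔ}·Δ^{Δ}. -/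
open Finset

/-! A vertex `v` of maximum degree `Δ` has `Δ` neighbours, so there are at least `Δ` vertices
other than `v`, each of degree at least `δ`. Hence for every monotone `f : ℕ → ℕ` with
`1 ≤ f δ` the product of `f (deg u)` is at least `f δ ^ Δ * f Δ`. The three bounds are the cases
`f d = d ^ 2`, `f d = d` and `f d = d ^ d`. -/

/-- The common bound for degree products. The condition `1 ≤ f (minDegree)` allows the vertices
beyond the first `Δ + 1` to be discarded; of the monotonicity of `f`, only comparisons with
its value at the minimum degree are needed. -/
lemma pow_minDegree_mul_le_prod_degree {V : Type} [Fintype V] [Nonempty V] (G : SimpleGraph V)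
    [DecidableRel G.Adj] (f : ℕ → ℕ) (hf : ∀ d, G.minDegree ≤ d → f G.minDegree ≤ f d)
    (h1 : 1 ≤ f G.minDegree) :
    f G.minDegree ^ G.maxDegree * f G.maxDegree ≤ ∏ u : V, f (G.degree u) := by
  classical
  obtain ⟨v, hv⟩ := G.exists_maximal_degree_vertex
  rw [← Finset.prod_erase_mul _ _ (mem_univ v), ← hv]
  refine Nat.mul_le_mul_right _ ?_
  have hcard : G.maxDegree ≤ #(univ.erase v) := by
    rw [card_erase_of_mem (mem_univ v), card_univ]
    have := G.maxDegree_lt_card_verts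
    omega
  calc f G.minDegree ^ G.maxDegree ≤ f G.minDegree ^ #(univ.erase v) :=
        Nat.pow_le_pow_right h1 hcard
    _ ≤ ∏ u ∈ univ.erase v, f (G.degree u) :=
        Finset.pow_card_le_prod _ _ _ fun u _ => hf _ (G.minDegree_le_degree u)

theorem stmt_11 {V : Type} [Fintype V] (G : SimpleGraph V) [DecidableRel G.Adj]
    (δ Δ : ℕ) (hδ1 : 1 ≤ δ) (hδΔ : δ < Δ) (hpar : Even (Δ * (δ + 1)))
    (hmin : G.minDegree = δ) (hmax : G.maxDegree = Δ) :
    δ ^ (2 * Δ) * Δ ^ 2 ≤ ∏ u : V, (G.degree u) ^ 2 ∧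
      δ ^ Δ * Δ ≤ ∏ u : V, G.degree u ∧
      δ ^ (δ * Δ) * Δ ^ Δ ≤ ∏ u : V, (G.degree u) ^ (G.degree u) := by
  -- On an empty vertex set `maxDegree` is `0`, contradicting `1 ≤ δ < Δ`.
  have hne : Nonempty V := by
    by_contra h
    rw [not_nonempty_iff] at h
    have := G.maxDegree_of_subsingleton
    omega
  subst hmin hmax
  refine ⟨?_, ?_, ?_⟩
  · rw [pow_mul]
    exact pow_minDegree_mul_le_prod_degree G (fun d => d ^ 2)
      (fun d hd => Nat.pow_le_pow_left hd 2) (Nat.one_le_pow _ _ hδ1)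
  · exact pow_minDegree_mul_le_prod_degree G (fun d => d) (fun d hd => hd) hδ1
  · rw [pow_mul]
    exact pow_minDegree_mul_le_prod_degree G (fun d => d ^ d)
      (fun d hd => (Nat.pow_le_pow_left hd _).trans (Nat.pow_le_pow_right (hδ1.trans hd) hd))
      (Nat.one_le_pow _ _ hδ1)
end

section
/- Let 1 ≤ δ < Δ be integers with Δ(δ+1) odd, and let G be a finite simple graph with minimum vertex degree δ and maximum vertex degree Δ. Then Π₁(G) = Π_{u∈V(G)} d_u² ≥ δ^{2(Δ−1)}·(δ+1)²·Δ², NK(G) = Π_{u∈V(G)} d_u ≥ δ^{Δ−1}·(δ+1)·Δ, and NK*(G) = Π_{u∈V(G)} d_u^{d_u} ≥ δ^{δ(Δ−1)}·(δ+1)^{δ+1}·Δ^{Δ}. -/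
open Finset

/-!
Since `Δ * (δ + 1)` is odd, `Δ` is odd and `δ` is even. A vertex `w` of degree `Δ` has odd degree,
so by the handshake lemma there is another vertex `v` of odd degree, and `δ` being even forces
`d_v ≥ δ + 1`. As `w` has `Δ` neighbours, at least `Δ - 1` vertices remain besides `v` and `w`, each
of degree at least `δ`. For a monotone `f` with `f δ ≥ 1` this gives
`∏ f (d_u) ≥ f δ ^ (Δ - 1) * f (δ + 1) * f Δ`; the three bounds are the cases `f x = x ^ 2`,
`f x = x` and `f x = x ^ x`.
-/

theorem prod_degree_lower_bound {V : Type} [Fintype V] (G : SimpleGraph V) [DecidableRel G.Adj]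
    (δ Δ : ℕ) (hδΔ : δ < Δ) (hpar : Odd (Δ * (δ + 1)))
    (hmin : G.minDegree = δ) (hmax : G.maxDegree = Δ)
    (f : ℕ → ℕ) (hf : Monotone f) (hf1 : 1 ≤ f δ) :
    f δ ^ (Δ - 1) * f (δ + 1) * f Δ ≤ ∏ u : V, f (G.degree u) := by
  classical
  obtain ⟨hΔo, hδo⟩ := Nat.odd_mul.mp hpar
  have hne : Nonempty V := by
    by_contra h
    rw [not_nonempty_iff] at h
    rw [SimpleGraph.maxDegree_of_subsingleton] at hmax
    omega
  obtain ⟨w, hw⟩ := G.exists_maximal_degree_vertex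
  have hwΔ : G.degree w = Δ := by omega
  obtain ⟨v, hvw, hvo⟩ := G.exists_ne_odd_degree_of_exists_odd_degree w (by rwa [hwΔ])
  have hδ (u : V) : δ ≤ G.degree u := hmin ▸ G.minDegree_le_degree u
  have hv : δ + 1 ≤ G.degree v := by
    have := hδ v
    rcases hvo with ⟨a, ha⟩
    rcases hδo with ⟨b, hb⟩
    omega
  have hcard : Δ - 1 ≤ ((univ.erase w).erase v).card := by
    rw [card_erase_of_mem (by simp [hvw]), card_erase_of_mem (mem_univ w), card_univ]
    have := G.degree_lt_card_verts w
    omega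
  have hrest : f δ ^ (Δ - 1) ≤ ∏ u ∈ (univ.erase w).erase v, f (G.degree u) :=
    (Nat.pow_le_pow_right hf1 hcard).trans
      (pow_card_le_prod _ _ _ fun u _ => hf (hδ u))
  rw [← prod_erase_mul univ _ (mem_univ w),
    ← prod_erase_mul (univ.erase w) _ (mem_erase.mpr ⟨hvw, mem_univ v⟩), hwΔ]
  exact Nat.mul_le_mul_right _ (Nat.mul_le_mul hrest (hf hv))

theorem monotone_nat_self_pow : Monotone fun x : ℕ => x ^ x := by
  refine monotone_nat_of_le_succ fun n => ?_
  exact (Nat.pow_le_pow_left n.le_succ n).trans (Nat.pow_le_pow_right n.succ_pos n.le_succ)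

theorem stmt_12 {V : Type} [Fintype V] (G : SimpleGraph V) [DecidableRel G.Adj]
    (δ Δ : ℕ) (hδ1 : 1 ≤ δ) (hδΔ : δ < Δ) (hpar : Odd (Δ * (δ + 1)))
    (hmin : G.minDegree = δ) (hmax : G.maxDegree = Δ) :
    δ ^ (2 * (Δ - 1)) * (δ + 1) ^ 2 * Δ ^ 2 ≤ ∏ u : V, (G.degree u) ^ 2 ∧
      δ ^ (Δ - 1) * (δ + 1) * Δ ≤ ∏ u : V, G.degree u ∧
      δ ^ (δ * (Δ - 1)) * (δ + 1) ^ (δ + 1) * Δ ^ Δ ≤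
        ∏ u : V, (G.degree u) ^ (G.degree u) := by
  have key := prod_degree_lower_bound G δ Δ hδΔ hpar hmin hmax
  refine ⟨?_, key id monotone_id hδ1, ?_⟩
  · rw [pow_mul]
    exact key (fun x => x ^ 2) (fun a b h => Nat.pow_le_pow_left h 2) (Nat.one_le_pow _ _ hδ1)
  · rw [pow_mul]
    exact key (fun x => x ^ x) monotone_nat_self_pow (Nat.one_le_pow _ _ hδ1)
end

section
/- Let 1 ≤ δ < Δ be integers and let h̃ : ℤ⁺ → ℝ⁺ be a positive non-increasing function. If G is a finite simple graph with exactly Δ+1 vertices, minimum vertex degree δ, and maximum vertex degree Δ, then J(G) = Σ_{u∈V(G)} h̃(d_u) ≥ δ·h̃(Δ) + (Δ−δ)·h̃(Δ−1) + h̃(δ). -/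
open Finset

/-!
Let `w` be a vertex of minimum degree `δ`. Its `δ` neighbours have degree at most `Δ`. Each of the
remaining `Δ - δ` vertices other than `w` is adjacent neither to itself nor to `w`, hence has degree
at most `Δ - 1`. Since `h` is non-increasing, summing the resulting bounds gives the claim.
-/

theorem stmt_15 {V : Type} [Fintype V] (G : SimpleGraph V) [DecidableRel G.Adj]
    (δ Δ : ℕ) (hδ1 : 1 ≤ δ) (hδΔ : δ < Δ)
    (h : ℕ → ℝ) (hpos : ∀ n, 0 < h n) (hanti : Antitone h)
    (hcard : Fintype.card V = Δ + 1)
    (hmin : G.minDegree = δ) (hmax : G.maxDegree = Δ) :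
    (δ : ℝ) * h Δ + ((Δ : ℝ) - (δ : ℝ)) * h (Δ - 1) + h δ ≤
      ∑ u : V, h (G.degree u) := by
  classical
  have : Nonempty V := Fintype.card_pos_iff.mp (by omega)
  obtain ⟨w, hw⟩ := G.exists_minimal_degree_vertex
  have hwδ : G.degree w = δ := by rw [← hw, hmin]
  set N := G.neighborFinset w with hN
  have hNcard : #N = δ := by rw [hN, G.card_neighborFinset_eq_degree, hwδ]
  have hwN : w ∈ Nᶜ := by simp [hN]
  have hRcard : #(Nᶜ.erase w) = Δ - δ := by
    rw [card_erase_of_mem hwN, card_compl, hNcard, hcard]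
    omega
  have hsplit : ∑ u : V, h (G.degree u) =
      ∑ u ∈ N, h (G.degree u) + (∑ u ∈ Nᶜ.erase w, h (G.degree u) + h δ) := by
    rw [← sum_add_sum_compl N, ← sum_erase_add _ _ hwN, hwδ]
  have hNsum : (δ : ℝ) * h Δ ≤ ∑ u ∈ N, h (G.degree u) := by
    rw [← hNcard, ← nsmul_eq_mul]
    exact card_nsmul_le_sum _ _ _ fun u _ => hanti (hmax ▸ G.degree_le_maxDegree u)
  have hRsum : ((Δ : ℝ) - δ) * h (Δ - 1) ≤ ∑ u ∈ Nᶜ.erase w, h (G.degree u) := by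
    rw [← Nat.cast_sub hδΔ.le, ← hRcard, ← nsmul_eq_mul]
    refine card_nsmul_le_sum _ _ _ fun u hu => hanti ?_
    have huw : u ≠ w := ne_of_mem_erase hu
    have hadj : ¬ G.Adj w u := by simpa [hN] using mem_of_mem_erase hu
    have hsub : G.neighborFinset u ⊆ ({u, w} : Finset V)ᶜ := by
      intro v hv
      rw [G.mem_neighborFinset] at hv
      simp only [mem_compl, mem_insert, mem_singleton, not_or]
      exact ⟨hv.ne', fun hvw => hadj (hvw ▸ hv.symm)⟩
    have hle := card_le_card hsub
    rw [G.card_neighborFinset_eq_degree, card_compl, card_pair huw, hcard] at hle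
    omega
  linarith
end

section
/- Let 1 ≤ δ < Δ be integers with δ odd, and let h̃ : ℤ⁺ → ℝ⁺ be a positive non-increasing function. If G is a finite simple graph with exactly Δ+2 vertices, minimum vertex degree δ, and maximum vertex degree Δ, then J(G) = Σ_{u∈V(G)} h̃(d_u) ≥ Δ·h̃(Δ) + h̃(Δ−1) + h̃(δ). -/
open Finset

/-!
Let `w` be a vertex of degree `δ`. If all the other `Δ + 1` vertices had degree `Δ`, the degree sum
would be `δ + (Δ + 1) * Δ`, which is odd, contradicting the handshake lemma. So some `v ≠ w` has
degree at most `Δ - 1`. By monotonicity `w`, `v` and the remaining `Δ` vertices contribute at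
least `h δ`, `h (Δ - 1)` and `Δ * h Δ` respectively.
-/

theorem stmt_17 {V : Type} [Fintype V] (G : SimpleGraph V) [DecidableRel G.Adj]
    (δ Δ : ℕ) (hδ1 : 1 ≤ δ) (hδΔ : δ < Δ) (hδodd : Odd δ)
    (h : ℕ → ℝ) (hpos : ∀ n, 0 < h n) (hanti : Antitone h)
    (hcard : Fintype.card V = Δ + 2)
    (hmin : G.minDegree = δ) (hmax : G.maxDegree = Δ) :
    (Δ : ℝ) * h Δ + h (Δ - 1) + h δ ≤ ∑ u : V, h (G.degree u) := by
  classical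
  have hne : Nonempty V := Fintype.card_pos_iff.mp (by omega)
  have hle : ∀ u, G.degree u ≤ Δ := fun u => hmax ▸ G.degree_le_maxDegree u
  obtain ⟨w, hw⟩ := G.exists_minimal_degree_vertex
  rw [hmin] at hw
  have hcw : (univ.erase w).card = Δ + 1 := by
    rw [card_erase_of_mem (mem_univ w), card_univ, hcard]; rfl
  obtain ⟨v, hv, hvd⟩ : ∃ v ∈ univ.erase w, G.degree v ≠ Δ := by
    by_contra! hall
    have hsum := G.sum_degrees_eq_twice_card_edges
    rw [← add_sum_erase _ _ (mem_univ w), sum_congr rfl hall, sum_const, hcw, ← hw,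
      smul_eq_mul] at hsum
    have heven : Even ((Δ + 1) * Δ) := by
      rw [mul_comm]; exact Nat.even_mul_succ_self Δ
    have hodd := hδodd.add_even heven
    rw [hsum] at hodd
    exact Nat.not_even_iff_odd.mpr hodd (even_two_mul _)
  have hcv : ((univ.erase w).erase v).card = Δ := by
    rw [card_erase_of_mem hv, hcw]; rfl
  have hrest : (Δ : ℝ) * h Δ ≤ ∑ u ∈ (univ.erase w).erase v, h (G.degree u) := by
    have := card_nsmul_le_sum ((univ.erase w).erase v) (fun u => h (G.degree u)) (h Δ)
      (fun u _ => hanti (hle u))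
    rwa [hcv, nsmul_eq_mul] at this
  have hv' : h (Δ - 1) ≤ h (G.degree v) := hanti (by have := hle v; omega)
  rw [← add_sum_erase _ _ (mem_univ w), ← add_sum_erase _ _ hv, ← hw]
  linarith
end
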